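/- arXiv:1002.0158 — 3 statements merged into one kernel-verified Lean document; each statement's English description precedes it below -/
import Mathlib

section
/- For a rational number k, the polynomial P_k = X³ − kX² + (k−3)X + 1 has a root in ℚ (equivalently, is reducible over ℚ) if and only if there exist nonzero integers p and q with p ≠ q such that k = (p³ − 3pq² + q³)/(pq(p − q)). -/
/-!
The simplest cubic `P_k = X ^ 3 - k X ^ 2 + (k - 3) X + 1` is affine in `k`: it equals
`(X ^ 3 - 3 X + 1) - k X (X - 1)`. Since `P_k(0) = 1` and `P_k(1) = -1`, a root `x` avoids the zeros
of `X (X - 1)` and therefore determines `k`. Writing `x = p / q` and clearing denominators gives the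
parametrization by pairs `(p, q)`.
-/

section Field

variable {F : Type*} [Field F] {k : F}

theorem simplestCubic_eq_zero_iff {x : F} :
    x ^ 3 - k * x ^ 2 + (k - 3) * x + 1 = 0 ↔
      x ≠ 0 ∧ x ≠ 1 ∧ k = (x ^ 3 - 3 * x + 1) / (x * (x - 1)) := by
  constructor
  · intro hx
    have x_ne_zero : x ≠ 0 := by
      rintro rfl
      exact one_ne_zero (α := F) (by linear_combination hx)
    have x_ne_one : x ≠ 1 := by
      rintro rfl
      exact one_ne_zero (α := F) (by linear_combination -hx)
    refine ⟨x_ne_zero, x_ne_one, ?_⟩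
    rw [eq_div_iff (mul_ne_zero x_ne_zero (sub_ne_zero.mpr x_ne_one))]
    linear_combination -hx
  · rintro ⟨x_ne_zero, x_ne_one, hk⟩
    rw [eq_div_iff (mul_ne_zero x_ne_zero (sub_ne_zero.mpr x_ne_one))] at hk
    linear_combination -hk

theorem simplestCubic_div_eq_zero_iff {p q : F} (hq : q ≠ 0) :
    (p / q) ^ 3 - k * (p / q) ^ 2 + (k - 3) * (p / q) + 1 = 0 ↔
      p ≠ 0 ∧ p ≠ q ∧ k = (p ^ 3 - 3 * p * q ^ 2 + q ^ 3) / (p * q * (p - q)) := by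
  have homogenize : ((p / q) ^ 3 - 3 * (p / q) + 1) / (p / q * (p / q - 1)) =
      (p ^ 3 - 3 * p * q ^ 2 + q ^ 3) / (p * q * (p - q)) := by
    rw [← mul_div_mul_left _ _ (pow_ne_zero 3 hq)]
    congr 1 <;> field_simp
  rw [simplestCubic_eq_zero_iff, homogenize, div_ne_zero_iff, and_iff_left hq, Ne, Ne,
    div_eq_one_iff_eq hq]

end Field

theorem stmt2_general (A : Type*) {K : Type*} [CommRing A] [Field K] [Algebra A K]
    [IsFractionRing A K] (k : K) :
    (∃ x : K, x ^ 3 - k * x ^ 2 + (k - 3) * x + 1 = 0) ↔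
      ∃ p q : A, p ≠ 0 ∧ q ≠ 0 ∧ p ≠ q ∧
        k = (algebraMap A K p ^ 3 - 3 * algebraMap A K p * algebraMap A K q ^ 2 +
            algebraMap A K q ^ 3) /
          (algebraMap A K p * algebraMap A K q * (algebraMap A K p - algebraMap A K q)) := by
  have algebraMap_injective : Function.Injective (algebraMap A K) := IsFractionRing.injective A K
  have algebraMap_ne_zero {a : A} : algebraMap A K a ≠ 0 ↔ a ≠ 0 :=
    map_ne_zero_iff _ algebraMap_injective
  have : Nontrivial A := (algebraMap A K).domain_nontrivial
  constructor
  · rintro ⟨x, hx⟩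
    obtain ⟨p, q, q_mem, rfl⟩ := IsFractionRing.div_surjective A x
    have q_ne_zero : algebraMap A K q ≠ 0 :=
      IsFractionRing.to_map_ne_zero_of_mem_nonZeroDivisors q_mem
    obtain ⟨p_ne_zero, p_ne_q, hk⟩ := (simplestCubic_div_eq_zero_iff q_ne_zero).mp hx
    exact ⟨p, q, algebraMap_ne_zero.mp p_ne_zero, algebraMap_ne_zero.mp q_ne_zero,
      ne_of_apply_ne _ p_ne_q, hk⟩
  · rintro ⟨p, q, p_ne_zero, q_ne_zero, p_ne_q, hk⟩
    exact ⟨algebraMap A K p / algebraMap A K q,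
      (simplestCubic_div_eq_zero_iff (algebraMap_ne_zero.mpr q_ne_zero)).mpr
        ⟨algebraMap_ne_zero.mpr p_ne_zero, algebraMap_injective.ne p_ne_q, hk⟩⟩

theorem stmt2 (k : ℚ) :
    (∃ x : ℚ, x ^ 3 - k * x ^ 2 + (k - 3) * x + 1 = 0) ↔
      ∃ p q : ℤ, p ≠ 0 ∧ q ≠ 0 ∧ p ≠ q ∧
        k = ((p : ℚ) ^ 3 - 3 * p * q ^ 2 + q ^ 3) / ((p : ℚ) * q * (p - q)) :=
  stmt2_general ℤ k
end

section
/- Define a relation R on the set S = {k ∈ ℚ : P_k is irreducible over ℚ} by: k R k' if and only if there exist integers c and d, not both zero, such that c³ + 3c²d − c²dk − cd²k − d³ ≠ 0 and k' = T(c,d,k). Then R is an equivalence relation on S, i.e., R is reflexive, symmetric, and transitive on S. -/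
/-!
Let `ω² = ω - 1`, so that `ω` is a primitive sixth root of unity, and put `κ k = k - 3ω` in `ℚ(ω)`.
Numerator and denominator of `T(c, d, k)` are the coordinates `N`, `D` in
`(c + dω)³ * κ k = N - 3Dω`, so `k' = T(c, d, k)` says that `D * κ k' = (c + dω)³ * κ k`.
After clearing the denominators of an element of `ℚ(ω)`, the relation becomes equality of the
classes of `κ k` and `κ k'` in `ℚ(ω)ˣ / (ℚˣ * (ℚ(ω)ˣ)³)`, which is an equivalence relation.
-/

open Polynomial

/-- The relation `R` on rational parameters: `k R k'` iff there exist integers `c`, `d`,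
not both zero, with `c³ + 3c²d − c²dk − cd²k − d³ ≠ 0` and `k' = T(c,d,k)`. -/
def simplestCubicRel (k k' : ℚ) : Prop :=
  ∃ c d : ℤ, ¬(c = 0 ∧ d = 0) ∧
    (c : ℚ) ^ 3 + 3 * c ^ 2 * d - c ^ 2 * d * k - c * d ^ 2 * k - d ^ 3 ≠ 0 ∧
    k' = ((c : ℚ) ^ 3 * k + 9 * c ^ 2 * d + 9 * c * d ^ 2 - 3 * c * d ^ 2 * k - d ^ 3 * k) /
          ((c : ℚ) ^ 3 + 3 * c ^ 2 * d - c ^ 2 * d * k - c * d ^ 2 * k - d ^ 3)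

section PowerClasses

variable (K L : Type*) [Field K] [Field L] [Algebra K L] (n : ℕ)

/-- The subgroup `Kˣ * (Lˣ)ⁿ` of `Lˣ`, for which `Lˣ / (Kˣ * (Lˣ)ⁿ)` is the group of `n`-th power
classes of `L` up to scalars from `K`. -/
def scalarMulPowSubgroup : Subgroup Lˣ :=
  (Units.map (algebraMap K L : K →* L)).range ⊔ (powMonoidHom n : Lˣ →* Lˣ).range

variable {K L n}

theorem mem_scalarMulPowSubgroup_iff {u : Lˣ} :
    u ∈ scalarMulPowSubgroup K L n ↔
      ∃ (a : Kˣ) (z : Lˣ), Units.map (algebraMap K L : K →* L) a * z ^ n = u := by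
  simp only [scalarMulPowSubgroup, Subgroup.mem_sup, MonoidHom.mem_range, exists_exists_eq_and,
    powMonoidHom_apply]

theorem mk_scalarMulPowSubgroup_eq_iff {x y : Lˣ} :
    (x : Lˣ ⧸ scalarMulPowSubgroup K L n) = y ↔
      ∃ z : L, z ≠ 0 ∧ ∃ q : K, q ≠ 0 ∧ q • (y : L) = z ^ n * x := by
  rw [QuotientGroup.eq, mem_scalarMulPowSubgroup_iff]
  constructor
  · rintro ⟨a, z, h⟩
    refine ⟨z, z.ne_zero, ↑a⁻¹, a⁻¹.ne_zero, ?_⟩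
    have hy : y = Units.map (algebraMap K L : K →* L) a * (z ^ n * x) := by
      rw [← mul_assoc, h, mul_right_comm, inv_mul_cancel, one_mul]
    simp [hy, Algebra.smul_def]
  · rintro ⟨z, hz, q, hq, h⟩
    refine ⟨(Units.mk0 q hq)⁻¹, Units.mk0 z hz, ?_⟩
    rw [map_inv, eq_inv_mul_iff_mul_eq, mul_left_comm, inv_mul_eq_iff_eq_mul]
    ext
    simpa [Algebra.smul_def, mul_comm] using h.symm

end PowerClasses

theorem exists_smul_eq_mk_algebraMap {R S : Type*} [CommRing R] [CommRing S] [Algebra R S]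
    (M : Submonoid R) [IsLocalization M S] {a b : S} (z : QuadraticAlgebra S a b) :
    ∃ m ∈ M, ∃ c d : R, m • z = ⟨algebraMap R S c, algebraMap R S d⟩ := by
  classical
  obtain ⟨m, hm⟩ := IsLocalization.exist_integer_multiples_of_finset M {z.re, z.im}
  obtain ⟨c, hc⟩ := hm z.re (by simp)
  obtain ⟨d, hd⟩ := hm z.im (by simp)
  exact ⟨m, m.2, c, d, QuadraticAlgebra.ext hc.symm hd.symm⟩

/-- The algebra `R[ω]` with `ω² = ω - 1`, so that `ω` is a primitive sixth root of unity when
`R = ℚ`. -/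
abbrev EisensteinAlgebra (R : Type*) [CommRing R] := QuadraticAlgebra R (-1) 1

-- This is the condition under which `QuadraticAlgebra` makes `R[ω]` a field when `R` is one.
instance fact_sq_ne_neg_one_add {R : Type*} [CommRing R] [LinearOrder R] [IsStrictOrderedRing R] :
    Fact (∀ r : R, r ^ 2 ≠ -1 + 1 * r) :=
  ⟨fun r h => by nlinarith [sq_nonneg (2 * r - 1)]⟩

/-- The element `k - 3ω` of `R[ω]`. Its multiple by its norm `k² - 3k + 9` is, up to conjugation,
the cube of a Lagrange resolvent of the simplest cubic `P_k`. -/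
def kummerElement {R : Type*} [CommRing R] (k : R) : EisensteinAlgebra R := ⟨k, -3⟩

theorem mk_pow_three_mul_kummerElement {R : Type*} [CommRing R] (c d k : R) :
    (⟨c, d⟩ : EisensteinAlgebra R) ^ 3 * kummerElement k =
      ⟨c ^ 3 * k + 9 * c ^ 2 * d + 9 * c * d ^ 2 - 3 * c * d ^ 2 * k - d ^ 3 * k,
        -3 * (c ^ 3 + 3 * c ^ 2 * d - c ^ 2 * d * k - c * d ^ 2 * k - d ^ 3)⟩ := by
  rw [kummerElement, pow_three]
  ext <;> simp only [QuadraticAlgebra.mk_mul_mk] <;> ring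

theorem kummerElement_ne_zero {R : Type*} [CommRing R] [CharZero R] (k : R) :
    kummerElement k ≠ 0 :=
  fun h => by simpa [kummerElement] using congrArg QuadraticAlgebra.im h

theorem smul_kummerElement_eq_mk_pow_three_mul_iff {K : Type*} [Field K] [CharZero K]
    {c d k k' q : K} (hq : q ≠ 0) :
    q • kummerElement k' = (⟨c, d⟩ : EisensteinAlgebra K) ^ 3 * kummerElement k ↔
      q = c ^ 3 + 3 * c ^ 2 * d - c ^ 2 * d * k - c * d ^ 2 * k - d ^ 3 ∧
      k' = (c ^ 3 * k + 9 * c ^ 2 * d + 9 * c * d ^ 2 - 3 * c * d ^ 2 * k - d ^ 3 * k) / q := by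
  rw [mk_pow_three_mul_kummerElement, kummerElement, QuadraticAlgebra.smul_mk,
    QuadraticAlgebra.mk.injEq, smul_eq_mul, smul_eq_mul, mul_comm q (-3),
    mul_right_inj' (by norm_num : (-3 : K) ≠ 0), eq_div_iff hq, mul_comm q k', and_comm]

theorem simplestCubicRel_iff_exists_int {k k' : ℚ} :
    simplestCubicRel k k' ↔
      ∃ c d : ℤ, (⟨c, d⟩ : EisensteinAlgebra ℚ) ≠ 0 ∧ ∃ q : ℚ, q ≠ 0 ∧
        q • kummerElement k' = (⟨c, d⟩ : EisensteinAlgebra ℚ) ^ 3 * kummerElement k := by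
  have mk_ne_zero_iff (c d : ℤ) :
      (⟨c, d⟩ : EisensteinAlgebra ℚ) ≠ 0 ↔ ¬(c = 0 ∧ d = 0) := by
    simp [QuadraticAlgebra.ext_iff]
  simp only [mk_ne_zero_iff]
  constructor
  · rintro ⟨c, d, hcd, hD, hk'⟩
    exact ⟨c, d, hcd, _, hD, (smul_kummerElement_eq_mk_pow_three_mul_iff hD).2 ⟨rfl, hk'⟩⟩
  · rintro ⟨c, d, hcd, q, hq, h⟩
    obtain ⟨rfl, hk'⟩ := (smul_kummerElement_eq_mk_pow_three_mul_iff hq).1 h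
    exact ⟨c, d, hcd, hq, hk'⟩

theorem simplestCubicRel_iff_exists {k k' : ℚ} :
    simplestCubicRel k k' ↔
      ∃ z : EisensteinAlgebra ℚ, z ≠ 0 ∧ ∃ q : ℚ, q ≠ 0 ∧
        q • kummerElement k' = z ^ 3 * kummerElement k := by
  rw [simplestCubicRel_iff_exists_int]
  constructor
  · rintro ⟨c, d, hz, h⟩
    exact ⟨_, hz, h⟩
  · rintro ⟨z, hz, q, hq, h⟩
    obtain ⟨m, hm, c, d, hcd⟩ := exists_smul_eq_mk_algebraMap (nonZeroDivisors ℤ) z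
    have hm : m ≠ 0 := nonZeroDivisors.ne_zero hm
    simp only [algebraMap_int_eq, eq_intCast] at hcd
    refine ⟨c, d, hcd ▸ smul_ne_zero hm hz, m ^ 3 * q, by positivity, ?_⟩
    rw [← hcd, mul_smul, h, _root_.smul_pow, smul_mul_assoc]
    norm_cast

/-- The Kummer class of the simplest cubic `P_k`: the image of `k - 3ω` among the cube classes of
`ℚ(ω)` up to rational scalars. -/
def kummerClass (k : ℚ) :
    (EisensteinAlgebra ℚ)ˣ ⧸ scalarMulPowSubgroup ℚ (EisensteinAlgebra ℚ) 3 :=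
  (Units.mk0 (kummerElement k) (kummerElement_ne_zero k) : (EisensteinAlgebra ℚ)ˣ)

theorem simplestCubicRel_iff_kummerClass_eq {k k' : ℚ} :
    simplestCubicRel k k' ↔ kummerClass k = kummerClass k' :=
  simplestCubicRel_iff_exists.trans (mk_scalarMulPowSubgroup_eq_iff
    (x := Units.mk0 _ (kummerElement_ne_zero k)) (y := Units.mk0 _ (kummerElement_ne_zero k'))).symm

theorem stmt3_general : Equivalence simplestCubicRel := by
  have h : simplestCubicRel = fun k k' => kummerClass k = kummerClass k' := by
    ext
    exact simplestCubicRel_iff_kummerClass_eq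
  exact h ▸ eq_equivalence.comap kummerClass

theorem stmt3 :
    (∀ k : ℚ, Irreducible (X ^ 3 - C k * X ^ 2 + C (k - 3) * X + 1 : ℚ[X]) →
      simplestCubicRel k k) ∧
    (∀ k k' : ℚ, Irreducible (X ^ 3 - C k * X ^ 2 + C (k - 3) * X + 1 : ℚ[X]) →
      Irreducible (X ^ 3 - C k' * X ^ 2 + C (k' - 3) * X + 1 : ℚ[X]) →
      simplestCubicRel k k' → simplestCubicRel k' k) ∧
    (∀ k k' k'' : ℚ, Irreducible (X ^ 3 - C k * X ^ 2 + C (k - 3) * X + 1 : ℚ[X]) →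
      Irreducible (X ^ 3 - C k' * X ^ 2 + C (k' - 3) * X + 1 : ℚ[X]) →
      Irreducible (X ^ 3 - C k'' * X ^ 2 + C (k'' - 3) * X + 1 : ℚ[X]) →
      simplestCubicRel k k' → simplestCubicRel k' k'' → simplestCubicRel k k'') :=
  ⟨fun k _ => stmt3_general.refl k, fun _ _ _ _ => stmt3_general.symm,
    fun _ _ _ _ _ _ => stmt3_general.trans⟩
end

section
/- Let ω ∈ ℂ be algebraic of degree 3 over ℚ. The set of roots in ℂ of the minimal polynomial of ω over ℚ equals {ω, (ω−1)/ω, −1/(ω−1)} if and only if there exists a rational number k such that P_k = X³ − kX² + (k−3)X + 1 is irreducible over ℚ and ω is a root of P_k; moreover in that case k = ω + (ω−1)/ω − 1/(ω−1). -/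
/-!
The Möbius transformation `z ↦ (z - 1) / z` has order three. The elementary symmetric functions of
its orbit `{z, (z - 1) / z, -1 / (z - 1)}` are `e₁ = s`, `e₂ = s - 3` and `e₃ = -1`, so the orbit is
the zero set of the simplest cubic with parameter `s`. Conversely, if the conjugates of an element
of degree three form such an orbit, they are three distinct roots, so its minimal polynomial becomes
that simplest cubic over the larger field, and `s`, being minus its quadratic coefficient, lies in
the base field. Distinctness holds because two points of the orbit coincide only if
`z ^ 2 - z + 1 = 0`, which an element of degree three cannot satisfy.
-/

open Polynomial

/-- Shanks' simplest cubic polynomial `P_k`, over an arbitrary commutative ring so that it can be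
transported along field extensions. -/
noncomputable def simplestCubic {R : Type*} [CommRing R] (k : R) : R[X] :=
  X ^ 3 - C k * X ^ 2 + C (k - 3) * X + 1

/-- The orbit of `z` under the Möbius transformation `z ↦ (z - 1) / z` of order three. At
`z = 0` and `z = 1` the actual orbit passes through infinity and `x / 0 = 0` yields a junk value. -/
def mobiusOrbit {K : Type*} [Field K] (z : K) : Set K :=
  {z, (z - 1) / z, -1 / (z - 1)}

/-- The sum of the elements of `mobiusOrbit z`, counted with multiplicity: the parameter of the
simplest cubic vanishing at `z`. -/
def mobiusTrace {K : Type*} [Field K] (z : K) : K :=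
  z + (z - 1) / z - 1 / (z - 1)

section CommRing

variable {R S : Type*} [CommRing R] [CommRing S]

lemma natDegree_simplestCubic [Nontrivial R] (k : R) : (simplestCubic k).natDegree = 3 := by
  unfold simplestCubic
  compute_degree!

lemma monic_simplestCubic (k : R) : (simplestCubic k).Monic := by
  unfold simplestCubic
  monicity!

lemma coeff_two_simplestCubic (k : R) : (simplestCubic k).coeff 2 = -k := by
  simp [simplestCubic, coeff_one]

lemma map_simplestCubic (f : R →+* S) (k : R) :
    (simplestCubic k).map f = simplestCubic (f k) := by
  simp [simplestCubic, map_ofNat f]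

lemma eval_simplestCubic (k z : R) :
    (simplestCubic k).eval z = z ^ 3 - k * z ^ 2 + (k - 3) * z + 1 := by
  simp [simplestCubic]

lemma aeval_simplestCubic [Algebra R S] (k : R) (z : S) :
    aeval z (simplestCubic k) =
      z ^ 3 - algebraMap R S k * z ^ 2 + (algebraMap R S k - 3) * z + 1 := by
  rw [← eval_map_algebraMap, map_simplestCubic, eval_simplestCubic]

lemma isRoot_simplestCubic_algebraMap_iff [Algebra R S] {k : R} {z : S} :
    (simplestCubic (algebraMap R S k)).IsRoot z ↔ aeval z (simplestCubic k) = 0 := by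
  rw [← map_simplestCubic, IsRoot, eval_map_algebraMap]

lemma ne_zero_of_isRoot_simplestCubic [Nontrivial R] {k z : R} (hz : (simplestCubic k).IsRoot z) :
    z ≠ 0 := by
  rintro rfl
  simp [eval_simplestCubic] at hz

lemma ne_one_of_isRoot_simplestCubic [Nontrivial R] {k z : R} (hz : (simplestCubic k).IsRoot z) :
    z ≠ 1 := by
  rintro rfl
  rw [IsRoot, eval_simplestCubic] at hz
  exact one_ne_zero (by linear_combination -hz)

end CommRing

section Field

variable {K : Type*} [Field K] {k z : K}

lemma eq_mobiusTrace_of_isRoot_simplestCubic (hz : (simplestCubic k).IsRoot z) :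
    k = mobiusTrace z := by
  have h0 := ne_zero_of_isRoot_simplestCubic hz
  have hsub : z - 1 ≠ 0 := sub_ne_zero.2 (ne_one_of_isRoot_simplestCubic hz)
  rw [IsRoot, eval_simplestCubic] at hz
  rw [mobiusTrace]
  field_simp
  linear_combination -hz

lemma simplestCubic_mobiusTrace (h0 : z ≠ 0) (h1 : z ≠ 1) :
    simplestCubic (mobiusTrace z) =
      (X - C z) * (X - C ((z - 1) / z)) * (X - C (-1 / (z - 1))) := by
  have hsub : z - 1 ≠ 0 := sub_ne_zero.2 h1
  have he₁ : z + (z - 1) / z + -1 / (z - 1) = mobiusTrace z := by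
    rw [mobiusTrace]
    ring
  have he₂ : z * ((z - 1) / z) + z * (-1 / (z - 1)) + (z - 1) / z * (-1 / (z - 1)) =
      mobiusTrace z - 3 := by
    rw [mobiusTrace]
    field_simp
    ring
  have he₃ : z * ((z - 1) / z) * (-1 / (z - 1)) = -1 := by
    field_simp
  rw [Cubic.prod_X_sub_C_eq, he₁, he₂, he₃, simplestCubic, Cubic.toPoly]
  simp only [map_one, map_neg]
  ring

lemma isRoot_simplestCubic_mobiusTrace_iff (h0 : z ≠ 0) (h1 : z ≠ 1) {w : K} :
    (simplestCubic (mobiusTrace z)).IsRoot w ↔ w ∈ mobiusOrbit z := by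
  simp only [simplestCubic_mobiusTrace h0 h1, root_mul, root_X_sub_C, mobiusOrbit,
    Set.mem_insert_iff, Set.mem_singleton_iff, or_assoc, eq_comm (b := w)]

lemma ncard_mobiusOrbit (h0 : z ≠ 0) (h1 : z ≠ 1) (h2 : z ^ 2 - z + 1 ≠ 0) :
    (mobiusOrbit z).ncard = 3 := by
  have hsub : z - 1 ≠ 0 := sub_ne_zero.2 h1
  refine Set.ncard_eq_three.2 ⟨z, (z - 1) / z, -1 / (z - 1), ?_, ?_, ?_, rfl⟩ <;>
  · intro h
    field_simp at h
    exact h2 (by linear_combination h)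

lemma eq_simplestCubic_of_isRoot_mobiusOrbit (h0 : z ≠ 0) (h1 : z ≠ 1) (h2 : z ^ 2 - z + 1 ≠ 0)
    {p : K[X]} (hp : p.Monic) (hdeg : p.natDegree = 3) (hroot : ∀ w ∈ mobiusOrbit z, p.IsRoot w) :
    p = simplestCubic (mobiusTrace z) := by
  have hfin : (mobiusOrbit z).Finite := Set.toFinite {z, (z - 1) / z, -1 / (z - 1)}
  have hcard : hfin.toFinset.card = 3 := by
    rw [← Set.ncard_eq_toFinset_card _ hfin, ncard_mobiusOrbit h0 h1 h2]
  have hq := monic_simplestCubic (mobiusTrace z)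
  refine eq_of_degree_le_of_eval_finset_eq hfin.toFinset ?_ ?_ (hp.trans hq.symm) fun w hw => ?_
  · rw [degree_eq_natDegree hp.ne_zero, hdeg, hcard]
  · rw [degree_eq_natDegree hp.ne_zero, degree_eq_natDegree hq.ne_zero, hdeg,
      natDegree_simplestCubic]
  · have hw' := hfin.mem_toFinset.1 hw
    exact (hroot w hw').trans ((isRoot_simplestCubic_mobiusTrace_iff h0 h1).2 hw').symm

end Field

section Minpoly

lemma isIntegral_of_natDegree_minpoly_pos {A B : Type*} [CommRing A] [Nontrivial A] [Ring B]
    [Algebra A B] {x : B} (h : 0 < (minpoly A x).natDegree) : IsIntegral A x :=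
  minpoly.ne_zero_iff.1 (ne_zero_of_natDegree_gt h)

lemma aeval_ne_zero_of_natDegree_lt_minpoly {F A : Type*} [Field F] [Ring A] [Algebra F A] {x : A}
    {p : F[X]} (hp : p ≠ 0) (hlt : p.natDegree < (minpoly F x).natDegree) : aeval x p ≠ 0 :=
  fun h => hlt.not_ge (natDegree_le_of_dvd (minpoly.dvd F x h) hp)

end Minpoly

section Extension

variable {F K : Type*} [Field F] [Field K] [Algebra F K] {k : F} {ω : K}

lemma algebraMap_eq_mobiusTrace (hk : aeval ω (simplestCubic k) = 0) :
    algebraMap F K k = mobiusTrace ω :=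
  eq_mobiusTrace_of_isRoot_simplestCubic (isRoot_simplestCubic_algebraMap_iff.2 hk)

lemma setOf_aeval_simplestCubic_eq_zero (hk : aeval ω (simplestCubic k) = 0) :
    {z : K | aeval z (simplestCubic k) = 0} = mobiusOrbit ω := by
  have hroot := isRoot_simplestCubic_algebraMap_iff.2 hk
  ext z
  rw [Set.mem_ofPred_eq, ← isRoot_simplestCubic_algebraMap_iff, algebraMap_eq_mobiusTrace hk,
    isRoot_simplestCubic_mobiusTrace_iff (ne_zero_of_isRoot_simplestCubic hroot)
      (ne_one_of_isRoot_simplestCubic hroot)]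

lemma exists_minpoly_eq_simplestCubic (hdeg : (minpoly F ω).natDegree = 3)
    (hroot : ∀ z ∈ mobiusOrbit ω, aeval z (minpoly F ω) = 0) :
    ∃ k : F, minpoly F ω = simplestCubic k := by
  have hint : IsIntegral F ω := isIntegral_of_natDegree_minpoly_pos (by lia)
  have hne (p : F[X]) (hp : p ≠ 0) (hlt : p.natDegree < 3) : aeval ω p ≠ 0 :=
    aeval_ne_zero_of_natDegree_lt_minpoly hp (hdeg ▸ hlt)
  have h0 : ω ≠ 0 := by
    simpa using hne X X_ne_zero (by simp)
  have h1 : ω ≠ 1 := by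
    simpa [sub_eq_zero] using hne (X - C 1) (X_sub_C_ne_zero 1) (by rw [natDegree_X_sub_C]; lia)
  have h2 : ω ^ 2 - ω + 1 ≠ 0 := by
    have hq : (X ^ 2 - X + 1 : F[X]).natDegree = 2 := by compute_degree!
    have hq₀ : (X ^ 2 - X + 1 : F[X]) ≠ 0 := ne_zero_of_natDegree_gt (n := 1) (by lia)
    simpa using hne (X ^ 2 - X + 1) hq₀ (by lia)
  have hmap : (minpoly F ω).map (algebraMap F K) = simplestCubic (mobiusTrace ω) :=
    eq_simplestCubic_of_isRoot_mobiusOrbit h0 h1 h2 ((minpoly.monic hint).map _)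
      (by rw [natDegree_map, hdeg]) fun z hz => by rw [IsRoot, eval_map_algebraMap, hroot z hz]
  have htrace : algebraMap F K (-(minpoly F ω).coeff 2) = mobiusTrace ω := by
    rw [map_neg, ← coeff_map, hmap, coeff_two_simplestCubic, neg_neg]
  refine ⟨-(minpoly F ω).coeff 2, map_injective _ (algebraMap F K).injective ?_⟩
  rw [hmap, map_simplestCubic, htrace]

end Extension

theorem stmt4_general {F K : Type*} [Field F] [Field K] [Algebra F K] (ω : K)
    (hdeg : (minpoly F ω).natDegree = 3) :
    ({z : K | aeval z (minpoly F ω) = 0} = {ω, (ω - 1) / ω, -1 / (ω - 1)} ↔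
      ∃ k : F, Irreducible (simplestCubic k) ∧ aeval ω (simplestCubic k) = 0) ∧
    ∀ k : F, aeval ω (simplestCubic k) = 0 →
      algebraMap F K k = ω + (ω - 1) / ω - 1 / (ω - 1) := by
  refine ⟨⟨fun hset => ?_, ?_⟩, fun k => algebraMap_eq_mobiusTrace⟩
  · have hint : IsIntegral F ω := isIntegral_of_natDegree_minpoly_pos (by lia)
    obtain ⟨k, hk⟩ := exists_minpoly_eq_simplestCubic hdeg fun z hz => hset.ge hz
    exact ⟨k, hk ▸ minpoly.irreducible hint, hk ▸ minpoly.aeval F ω⟩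
  · rintro ⟨k, hirr, hk⟩
    rw [← minpoly.eq_of_irreducible_of_monic hirr hk (monic_simplestCubic k)]
    exact setOf_aeval_simplestCubic_eq_zero hk

theorem stmt4 (ω : ℂ) (halg : IsAlgebraic ℚ ω) (hdeg : (minpoly ℚ ω).natDegree = 3) :
    (({z : ℂ | (aeval z) (minpoly ℚ ω) = 0} = {ω, (ω - 1) / ω, -1 / (ω - 1)}) ↔
      ∃ k : ℚ, Irreducible (X ^ 3 - C k * X ^ 2 + C (k - 3) * X + 1 : ℚ[X]) ∧
        ω ^ 3 - (k : ℂ) * ω ^ 2 + ((k : ℂ) - 3) * ω + 1 = 0) ∧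
    (∀ k : ℚ, Irreducible (X ^ 3 - C k * X ^ 2 + C (k - 3) * X + 1 : ℚ[X]) →
      ω ^ 3 - (k : ℂ) * ω ^ 2 + ((k : ℂ) - 3) * ω + 1 = 0 →
      (k : ℂ) = ω + (ω - 1) / ω - 1 / (ω - 1)) := by
  obtain ⟨hiff, htrace⟩ := stmt4_general ω hdeg
  simp only [aeval_simplestCubic] at hiff htrace
  exact ⟨hiff, fun k _ => htrace k⟩
end
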